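/- arXiv:2110.10458 — 2 statements merged into one kernel-verified Lean document; each statement's English description precedes it below -/
import Mathlib

section
/- There exists a unique sequence of maps (dt_n)_{n≥1}, dt_n : H_n(ℍ_ℂ) → ℍ_ℂ, such that: (i) each dt_n is continuous; (ii) dt₁((x₁₁)) = x₁₁; (iii) for every n ≥ 1 and every x = (x_{ij}) ∈ H_{n+1}(ℍ_ℂ) with x₁₁ ≠ 0, dt_{n+1}(x) = x₁₁ · dt_n((x_{ij} − x₁₁⁻¹·x_{i1}·x_{1j})_{2≤i,j≤n+1}). Moreover, all values of every dt_n lie in ℂ ⊆ ℍ_ℂ. -/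
/-!
For a hermitian matrix `A` with corner entry `x`, put `p(t) = dt (B - t V)`, where `B` is the lower
right block of `A` and `V = (x_{i1} x_{1j})`; the recursion asks for `dt A = x p(x⁻¹)`. The point is
that the polynomial `p` has degree at most one, so that the right-hand side is
`x p(0) + (p(1) - p(0))`. This expression makes sense for every `x` and defines `dt` recursively as
a polynomial, hence continuous, map with values in `ℂ`.

The degree bound is proved together with the identity `dt(A)² = det Â` by induction on the size. The
Schur complement formula gives `det Â = x² det Ŝ` with `S = B - x⁻¹ V`. So, as `x → 0` with the
other entries of `A` fixed, `x² p(x⁻¹)² = det Â` has a limit, which forces `deg p² ≤ 2`. Then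
`dt(A)² = det Â` follows for `x ≠ 0`, and for `x = 0` by continuity.

Uniqueness holds because the matrices with `x ≠ 0` are dense in the hermitian ones.
-/

noncomputable section

open Matrix

/-- The biquaternions `ℍ_ℂ`: quaternions with complex coefficients. -/
abbrev HC : Type := Quaternion ℂ

/-- The embedding `ℂ ⊆ ℍ_ℂ` as scalar biquaternions. -/
def cq (z : ℂ) : HC := ⟨z, 0, 0, 0⟩

/-- The `ℂ`-linear involution `x ↦ x⋄` (quaternion conjugation). -/
def qdia (x : HC) : HC := ⟨x.re, -x.imI, -x.imJ, -x.imK⟩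

/-- Coefficientwise complex conjugation `x ↦ x̄`. -/
def qbar (x : HC) : HC :=
  ⟨starRingEnd ℂ x.re, starRingEnd ℂ x.imI, starRingEnd ℂ x.imJ, starRingEnd ℂ x.imK⟩

/-- The conjugate-linear involution `x* = (x̄)⋄`. -/
def qstar (x : HC) : HC := qdia (qbar x)

/-- The natural (Euclidean/product) topology on the biquaternions `ℍ_ℂ ≅ ℂ⁴`. -/
instance : TopologicalSpace HC :=
  TopologicalSpace.induced (fun q : HC => (q.re, q.imI, q.imJ, q.imK)) inferInstance

/-- The 2×2 complex matrix `x̂` associated to a biquaternion `x`. -/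
def hat (x : HC) : Matrix (Fin 2) (Fin 2) ℂ :=
  !![x.re + Complex.I * x.imI, x.imJ + Complex.I * x.imK;
     -x.imJ + Complex.I * x.imK, x.re - Complex.I * x.imI]

/-- The `2n × 2n` complex matrix `Â` obtained by replacing every biquaternion entry `a`
of `A` by the 2×2 block `â`. -/
def hatM {n : ℕ} (A : Matrix (Fin n) (Fin n) HC) :
    Matrix (Fin n × Fin 2) (Fin n × Fin 2) ℂ :=
  Matrix.of fun p q => hat (A p.1 q.1) p.2 q.2

/-- `A` is `⋄`-hermitian: `Aᵈ = A`, i.e. `(A j i)⋄ = A i j` for all `i j`.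
`H_n(ℍ_ℂ)` is the collection of all such matrices. -/
def IsHerm {n : ℕ} (A : Matrix (Fin n) (Fin n) HC) : Prop :=
  ∀ i j, qdia (A j i) = A i j

/-- The defining properties of the sequence of determinants `(dt_n)_{n ≥ 1}`:
`D n` plays the role of `dt_{n+1} : H_{n+1}(ℍ_ℂ) → ℍ_ℂ`.
(i) continuity on `H_{n+1}(ℍ_ℂ)`; (ii) `dt₁((x₁₁)) = x₁₁`;
(iii) the inductive formula for `dt_{n+1}` when `x₁₁ ≠ 0`. -/
def IsDtSeq (D : ∀ n : ℕ, Matrix (Fin (n + 1)) (Fin (n + 1)) HC → HC) : Prop :=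
  (∀ n : ℕ, ContinuousOn (D n) {A | IsHerm A}) ∧
  (∀ A : Matrix (Fin 1) (Fin 1) HC, IsHerm A → D 0 A = A 0 0) ∧
  (∀ (n : ℕ) (A : Matrix (Fin (n + 2)) (Fin (n + 2)) HC), IsHerm A → A 0 0 ≠ 0 →
    D (n + 1) A = A 0 0 *
      D n (Matrix.of fun i j : Fin (n + 1) =>
        A i.succ j.succ - Ring.inverse (A 0 0) * A i.succ 0 * A 0 j.succ))

open Polynomial Topology Filter

open scoped Quaternion

/-! ### Polynomials of bounded degree -/

lemma natDegree_le_of_tendsto_pow_mul_eval_inv {K : Type*} [Field K] [TopologicalSpace K]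
    [IsTopologicalRing K] [T2Space K] [(𝓝[≠] (0 : K)).NeBot] {p : K[X]} {d : ℕ} {c : K}
    (h : Tendsto (fun x => x ^ d * p.eval x⁻¹) (𝓝[≠] 0) (𝓝 c)) : p.natDegree ≤ d := by
  by_contra! hd
  obtain ⟨k, hk⟩ : ∃ k, p.natDegree = k + 1 + d := ⟨p.natDegree - d - 1, by omega⟩
  have reverse_eval : ∀ x ≠ 0, x ^ (k + 1) * (x ^ d * p.eval x⁻¹) = p.reverse.eval x := by
    intro x hx
    let := invertibleOfNonzero (inv_ne_zero hx)
    have := eval₂_reverse_mul_pow (RingHom.id K) x⁻¹ p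
    rw [eval₂_id, eval₂_id, invOf_eq_inv, inv_inv, hk] at this
    rw [← this, ← mul_assoc, ← pow_add, mul_left_comm, ← mul_pow, mul_inv_cancel₀ hx, one_pow,
      mul_one]
  have tendsto_zero : Tendsto (fun x => x ^ (k + 1) * (x ^ d * p.eval x⁻¹)) (𝓝[≠] 0) (𝓝 0) := by
    have hpow : Tendsto (fun x : K => x ^ (k + 1)) (𝓝[≠] 0) (𝓝 0) := by
      simpa using ((continuous_pow (M := K) (k + 1)).tendsto 0).mono_left nhdsWithin_le_nhds
    simpa using hpow.mul h
  have tendsto_leadingCoeff :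
      Tendsto (fun x => x ^ (k + 1) * (x ^ d * p.eval x⁻¹)) (𝓝[≠] 0) (𝓝 p.leadingCoeff) := by
    rw [← coeff_zero_reverse, coeff_zero_eq_eval_zero]
    exact (p.reverse.continuous.continuousWithinAt (s := {0}ᶜ)).tendsto.congr'
      (eventually_nhdsWithin_of_forall fun x hx => (reverse_eval x hx).symm)
  have : p = 0 := leadingCoeff_eq_zero.mp (tendsto_nhds_unique tendsto_leadingCoeff tendsto_zero)
  rw [this, natDegree_zero] at hk
  omega

lemma mul_eval_inv_of_natDegree_le_one {K : Type*} [Field K] {p : K[X]} (hp : p.natDegree ≤ 1)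
    {x : K} (hx : x ≠ 0) : x * p.eval x⁻¹ = x * p.eval 0 + (p.eval 1 - p.eval 0) := by
  obtain ⟨a, b, rfl⟩ := exists_eq_X_add_C_of_natDegree_le_one hp
  simp only [eval_add, eval_mul, eval_C, eval_X]
  field_simp
  ring

/-! ### The Schur pencil and the corner entry -/

section Pencil

variable {R H : Type*} {n : ℕ}

/-- The pencil `(x_{ij} - t · x_{i1} x_{1j})_{i,j ≥ 2}`; at `t = x₁₁⁻¹` it is the Schur
complement of the corner entry. -/
def schur [Ring H] [SMul R H] (t : R) (A : Matrix (Fin (n + 1)) (Fin (n + 1)) H) :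
    Matrix (Fin n) (Fin n) H :=
  Matrix.of fun i j => A i.succ j.succ - t • (A i.succ 0 * A 0 j.succ)

lemma map_schur {R' H' : Type*} [Ring H] [Ring H'] [SMul R H] [SMul R' H'] {σ : R → R'}
    (f : H →+* H') (hf : ∀ t x, f (t • x) = σ t • f x) (t : R)
    (A : Matrix (Fin (n + 1)) (Fin (n + 1)) H) :
    (schur t A).map f = schur (σ t) (A.map f) := by
  ext i j
  simp [schur, hf]

/-- `A` with its corner entry replaced by `a`. -/
def withCorner (A : Matrix (Fin (n + 1)) (Fin (n + 1)) H) (a : H) :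
    Matrix (Fin (n + 1)) (Fin (n + 1)) H :=
  A.updateRow 0 (Function.update (A 0) 0 a)

@[simp]
lemma withCorner_zero_zero (A : Matrix (Fin (n + 1)) (Fin (n + 1)) H) (a : H) :
    withCorner A a 0 0 = a := by
  simp [withCorner]

@[simp]
lemma withCorner_self (A : Matrix (Fin (n + 1)) (Fin (n + 1)) H) :
    withCorner A (A 0 0) = A := by
  simp [withCorner]

@[simp]
lemma schur_withCorner [Ring H] [SMul R H] (t : R) (A : Matrix (Fin (n + 1)) (Fin (n + 1)) H)
    (a : H) : schur t (withCorner A a) = schur t A := by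
  ext i j
  simp [schur, withCorner]

lemma isHermitian_withCorner [Star H] {A : Matrix (Fin (n + 1)) (Fin (n + 1)) H}
    (hA : A.IsHermitian) {a : H} (ha : IsSelfAdjoint a) : (withCorner A a).IsHermitian := by
  refine Matrix.IsHermitian.ext fun i j => ?_
  cases i using Fin.cases <;> cases j using Fin.cases <;>
    simp [withCorner, ha.star_eq, hA.apply]

lemma continuous_withCorner [TopologicalSpace H] (A : Matrix (Fin (n + 1)) (Fin (n + 1)) H) :
    Continuous (withCorner A) :=
  continuous_const.matrix_updateRow 0 (continuous_const.update 0 continuous_id)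

end Pencil

lemma det_comp_eq_pow_mul_det_schur {K m : Type*} [CommRing K] [Fintype m] [DecidableEq m] {n : ℕ}
    {M : Matrix (Fin (n + 1)) (Fin (n + 1)) (Matrix m m K)} {u : Kˣ} (hM : M 0 0 = (u : K) • 1) :
    (Matrix.comp _ _ _ _ K M).det =
      (u : K) ^ Fintype.card m * (Matrix.comp _ _ _ _ K (schur (↑u⁻¹ : K) M)).det := by
  let e : m ⊕ Fin n × m ≃ Fin (n + 1) × m :=
    (((finSuccEquiv n).prodCongr (Equiv.refl m)).trans optionProdEquiv).symm
  let C : Matrix m (Fin n × m) K := Matrix.of fun a q => M 0 q.1.succ a q.2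
  let D : Matrix (Fin n × m) m K := Matrix.of fun p b => M p.1.succ 0 p.2 b
  let B : Matrix (Fin n × m) (Fin n × m) K := Matrix.of fun p q => M p.1.succ q.1.succ p.2 q.2
  let : Invertible ((u : K) • (1 : Matrix m m K)) :=
    ⟨(↑u⁻¹ : K) • 1, by simp [smul_smul], by simp [smul_smul]⟩
  have blocks : (Matrix.comp _ _ _ _ K M).submatrix e e =
      Matrix.fromBlocks ((u : K) • 1) C D B := by
    ext (a | ⟨i, a⟩) (b | ⟨j, b⟩) <;> simp [e, C, D, B, ← hM, optionProdEquiv]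
  have complement : B - D * ⅟((u : K) • (1 : Matrix m m K)) * C =
      Matrix.comp _ _ _ _ K (schur (↑u⁻¹ : K) M) := by
    change B - D * ((↑u⁻¹ : K) • 1) * C = _
    ext ⟨i, a⟩ ⟨j, b⟩
    simp [schur, B, C, D, Matrix.mul_apply, Finset.mul_sum, mul_assoc]
  rw [← Matrix.det_submatrix_equiv_self e, blocks, Matrix.det_fromBlocks₁₁, complement,
    Matrix.det_smul, Matrix.det_one, mul_one]

/-! ### The determinant over an arbitrary commutative ring -/

section Dt

variable {R S : Type*} [CommRing R] [CommRing S] {n : ℕ}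

/-- The determinant of matrices of quaternions over a commutative ring, given by the division-free
recursion `dt A = x₁₁ p(0) + (p(1) - p(0))` with `p(t) = dt (schur t A)`. Over `ℂ` and for hermitian
`A` the polynomial `p` has degree at most one, so this is `x₁₁ p(x₁₁⁻¹)` whenever `x₁₁ ≠ 0`. -/
def dt : ∀ {n : ℕ}, Matrix (Fin n) (Fin n) ℍ[R] → R
  | 0, _ => 1
  | _ + 1, A => (A 0 0).re * dt (schur (0 : R) A) + (dt (schur (1 : R) A) - dt (schur (0 : R) A))

/-- The ring homomorphism between quaternion rings that acts on coefficients by `φ`. -/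
def quaternionMap (φ : R →+* S) : ℍ[R] →+* ℍ[S] where
  toFun x := ⟨φ x.re, φ x.imI, φ x.imJ, φ x.imK⟩
  map_one' := by ext <;> simp
  map_zero' := by ext <;> simp
  map_add' x y := by ext <;> exact map_add φ _ _
  map_mul' x y := by
    refine Eq.trans ?_ (QuaternionAlgebra.mk_mul_mk ..).symm
    ext <;> simp [sub_eq_add_neg]

@[simp] lemma re_quaternionMap (φ : R →+* S) (x : ℍ[R]) : (quaternionMap φ x).re = φ x.re := rfl

@[simp] lemma imI_quaternionMap (φ : R →+* S) (x : ℍ[R]) : (quaternionMap φ x).imI = φ x.imI := rfl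

@[simp] lemma imJ_quaternionMap (φ : R →+* S) (x : ℍ[R]) : (quaternionMap φ x).imJ = φ x.imJ := rfl

@[simp] lemma imK_quaternionMap (φ : R →+* S) (x : ℍ[R]) : (quaternionMap φ x).imK = φ x.imK := rfl

lemma quaternionMap_smul (φ : R →+* S) (t : R) (x : ℍ[R]) :
    quaternionMap φ (t • x) = φ t • quaternionMap φ x := by
  ext <;> simp

lemma dt_map (φ : R →+* S) (A : Matrix (Fin n) (Fin n) ℍ[R]) :
    dt (A.map (quaternionMap φ)) = φ (dt A) := by
  induction n with
  | zero => simp [dt]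
  | succ n ih =>
    have h (t : R) : dt (schur (φ t) (A.map (quaternionMap φ))) = φ (dt (schur t A)) := by
      rw [← map_schur _ (quaternionMap_smul φ), ih]
    have h0 := h 0
    have h1 := h 1
    rw [map_zero] at h0
    rw [map_one] at h1
    simp only [dt, h0, h1, Matrix.map_apply, re_quaternionMap, map_add, map_sub, map_mul]

/-- The polynomial `p` with `p(t) = dt (schur t A)`. It is the determinant of the pencil with the
indeterminate as parameter, over the quaternions with polynomial coefficients. -/
def schurPoly (A : Matrix (Fin (n + 1)) (Fin (n + 1)) ℍ[R]) : R[X] :=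
  dt (schur (X : R[X]) (A.map (quaternionMap C)))

lemma eval_schurPoly (A : Matrix (Fin (n + 1)) (Fin (n + 1)) ℍ[R]) (t : R) :
    (schurPoly A).eval t = dt (schur t A) := by
  have eval_map_C : (A.map (quaternionMap C)).map (quaternionMap (evalRingHom t)) = A := by
    ext i j <;> simp
  rw [schurPoly, ← coe_evalRingHom, ← dt_map, map_schur _ (quaternionMap_smul _), eval_map_C,
    coe_evalRingHom, eval_X]

lemma isHermitian_schur {A : Matrix (Fin (n + 1)) (Fin (n + 1)) ℍ[R]} (hA : A.IsHermitian)
    (t : R) : (schur t A).IsHermitian :=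
  Matrix.IsHermitian.ext fun i j => by simp [schur, Quaternion.star_smul, hA.apply]

lemma diag_eq_coe_re [NoZeroDivisors R] [CharZero R] {A : Matrix (Fin n) (Fin n) ℍ[R]}
    (hA : A.IsHermitian) (i : Fin n) : A i i = ((A i i).re : ℍ[R]) :=
  Quaternion.star_eq_self.mp (hA.apply i i)

lemma diag_re_ne_zero [NoZeroDivisors R] [CharZero R] {A : Matrix (Fin n) (Fin n) ℍ[R]}
    (hA : A.IsHermitian) {i : Fin n} (h : A i i ≠ 0) : (A i i).re ≠ 0 := by
  intro h0
  rw [diag_eq_coe_re hA, h0, Quaternion.coe_zero] at h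
  exact h rfl

end Dt

/-! ### Topology of the biquaternions -/

namespace HC

lemma continuous_iff {X : Type*} [TopologicalSpace X] {f : X → HC} :
    Continuous f ↔ Continuous (fun x => (f x).re) ∧ Continuous (fun x => (f x).imI) ∧
      Continuous (fun x => (f x).imJ) ∧ Continuous (fun x => (f x).imK) := by
  simp only [continuous_induced_rng, Function.comp_def, continuous_prodMk]

@[fun_prop]
lemma continuous_re : Continuous fun x : HC => x.re := (continuous_iff.mp continuous_id).1

@[fun_prop]
lemma continuous_imI : Continuous fun x : HC => x.imI := (continuous_iff.mp continuous_id).2.1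

@[fun_prop]
lemma continuous_imJ : Continuous fun x : HC => x.imJ := (continuous_iff.mp continuous_id).2.2.1

@[fun_prop]
lemma continuous_imK : Continuous fun x : HC => x.imK := (continuous_iff.mp continuous_id).2.2.2

instance : IsTopologicalRing HC where
  continuous_add := continuous_iff.mpr <| by
    simp only [Quaternion.re_add, Quaternion.imI_add, Quaternion.imJ_add, Quaternion.imK_add]
    exact ⟨by fun_prop, by fun_prop, by fun_prop, by fun_prop⟩
  continuous_mul := continuous_iff.mpr <| by
    simp only [Quaternion.re_mul, Quaternion.imI_mul, Quaternion.imJ_mul, Quaternion.imK_mul]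
    exact ⟨by fun_prop, by fun_prop, by fun_prop, by fun_prop⟩
  continuous_neg := continuous_iff.mpr <| by
    simp only [Quaternion.re_neg, Quaternion.imI_neg, Quaternion.imJ_neg, Quaternion.imK_neg]
    exact ⟨by fun_prop, by fun_prop, by fun_prop, by fun_prop⟩

instance : T2Space HC :=
  T2Space.of_injective_continuous (Quaternion.equivProd ℂ).injective continuous_induced_dom

lemma continuous_coe : Continuous ((↑) : ℂ → HC) :=
  continuous_iff.mpr
    ⟨continuous_id, continuous_const, continuous_const, continuous_const⟩

instance : ContinuousSMul ℂ HC where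
  continuous_smul := by
    simp only [← Quaternion.coe_mul_eq_smul]
    exact (continuous_coe.comp continuous_fst).mul continuous_snd

end HC

lemma continuous_schur {n : ℕ} (t : ℂ) :
    Continuous (schur t : Matrix (Fin (n + 1)) (Fin (n + 1)) HC → _) := by
  refine continuous_matrix fun i j => ?_
  simp only [schur, Matrix.of_apply]
  fun_prop

lemma continuous_dt {n : ℕ} : Continuous (dt : Matrix (Fin n) (Fin n) HC → ℂ) := by
  induction n with
  | zero => exact continuous_const
  | succ n ih =>
    have h (t : ℂ) : Continuous fun A : Matrix (Fin (n + 1)) (Fin (n + 1)) HC => dt (schur t A) :=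
      ih.comp (continuous_schur t)
    simp only [dt]
    fun_prop

lemma continuous_hat : Continuous hat := by
  refine continuous_matrix <| Fin.forall_fin_two.mpr
    ⟨Fin.forall_fin_two.mpr ⟨?_, ?_⟩, Fin.forall_fin_two.mpr ⟨?_, ?_⟩⟩
  · exact (by fun_prop : Continuous fun x : HC => x.re + Complex.I * x.imI)
  · exact (by fun_prop : Continuous fun x : HC => x.imJ + Complex.I * x.imK)
  · exact (by fun_prop : Continuous fun x : HC => -x.imJ + Complex.I * x.imK)
  · exact (by fun_prop : Continuous fun x : HC => x.re - Complex.I * x.imI)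

lemma continuous_hatM {n : ℕ} : Continuous (hatM (n := n)) :=
  continuous_matrix fun p q =>
    (continuous_hat.comp (continuous_id.matrix_elem p.1 q.1)).matrix_elem p.2 q.2

lemma eq_of_isHermitian_of_eq_of_corner_ne_zero {Y : Type*} [TopologicalSpace Y] [T2Space Y]
    {n : ℕ} {f g : Matrix (Fin (n + 1)) (Fin (n + 1)) HC → Y}
    (hf : ContinuousOn f {A | A.IsHermitian}) (hg : ContinuousOn g {A | A.IsHermitian})
    (hfg : ∀ A, A.IsHermitian → A 0 0 ≠ 0 → f A = g A)
    {A : Matrix (Fin (n + 1)) (Fin (n + 1)) HC} (hA : A.IsHermitian) : f A = g A := by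
  have hherm (x : ℂ) : (withCorner A x).IsHermitian :=
    isHermitian_withCorner hA (Quaternion.star_coe x)
  have hcont : Continuous fun x : ℂ => withCorner A x :=
    (continuous_withCorner A).comp HC.continuous_coe
  have h : (fun x : ℂ => f (withCorner A x)) = fun x : ℂ => g (withCorner A x) :=
    Continuous.ext_on (dense_compl_singleton (0 : ℂ)) (hf.comp_continuous hcont hherm)
      (hg.comp_continuous hcont hherm) fun x hx =>
        hfg _ (hherm x) (by simpa [Quaternion.coe_inj, ← Quaternion.coe_zero] using hx)
  simpa [← diag_eq_coe_re hA] using congrFun h (A 0 0).re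

/-! ### The square of the determinant -/

/-- The representation `x ↦ x̂` as a homomorphism of `ℂ`-algebras. -/
def hatAlgHom : HC →ₐ[ℂ] Matrix (Fin 2) (Fin 2) ℂ :=
  AlgHom.ofLinearMap
    { toFun := hat
      map_add' := fun x y => by ext a b; fin_cases a <;> fin_cases b <;> simp [hat] <;> ring
      map_smul' := fun t x => by ext a b; fin_cases a <;> fin_cases b <;> simp [hat] <;> ring }
    (by ext a b; fin_cases a <;> fin_cases b <;> simp [hat])
    (fun x y => by
      ext a b
      fin_cases a <;> fin_cases b <;> simp [hat, Matrix.mul_apply, Fin.sum_univ_two] <;>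
        ring_nf <;> simp only [Complex.I_sq] <;> ring)

lemma hatM_eq_comp {n : ℕ} (A : Matrix (Fin n) (Fin n) HC) :
    hatM A = Matrix.comp _ _ _ _ ℂ (A.map hatAlgHom) :=
  rfl

lemma det_hatM_eq_sq_mul_det_schur {n : ℕ} {A : Matrix (Fin (n + 1)) (Fin (n + 1)) HC} {x : ℂ}
    (hx : x ≠ 0) (hA : A 0 0 = x) : (hatM A).det = x ^ 2 * (hatM (schur x⁻¹ A)).det := by
  have corner : (A.map hatAlgHom) 0 0 = (Units.mk0 x hx : ℂ) • 1 := by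
    rw [Matrix.map_apply, hA, Units.val_mk0, ← Algebra.algebraMap_eq_smul_one]
    exact hatAlgHom.commutes x
  have hmap : (schur x⁻¹ A).map hatAlgHom = schur x⁻¹ (A.map hatAlgHom) :=
    map_schur (σ := id) hatAlgHom.toRingHom (fun t y => map_smul hatAlgHom t y) x⁻¹ A
  rw [hatM_eq_comp, det_comp_eq_pow_mul_det_schur corner, hatM_eq_comp, hmap, Fintype.card_fin,
    Units.val_inv_eq_inv_val, Units.val_mk0]

lemma natDegree_schurPoly_le_one {n : ℕ}
    (hsq : ∀ B : Matrix (Fin n) (Fin n) HC, B.IsHermitian → dt B ^ 2 = (hatM B).det)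
    {A : Matrix (Fin (n + 1)) (Fin (n + 1)) HC} (hA : A.IsHermitian) :
    (schurPoly A).natDegree ≤ 1 := by
  have hcont : Continuous fun x : ℂ => (hatM (withCorner A x)).det :=
    (continuous_hatM.comp ((continuous_withCorner A).comp HC.continuous_coe)).matrix_det
  have hdet : ∀ x : ℂ, x ≠ 0 →
      (hatM (withCorner A x)).det = x ^ 2 * (schurPoly A ^ 2).eval x⁻¹ := by
    intro x hx
    rw [det_hatM_eq_sq_mul_det_schur hx (withCorner_zero_zero A _), schur_withCorner,
      eval_pow, eval_schurPoly, hsq _ (isHermitian_schur hA _)]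
  have hdeg : (schurPoly A ^ 2).natDegree ≤ 2 :=
    natDegree_le_of_tendsto_pow_mul_eval_inv <|
      (hcont.continuousWithinAt (s := {0}ᶜ)).tendsto.congr'
        (eventually_nhdsWithin_of_forall hdet)
  rw [natDegree_pow] at hdeg
  omega

lemma dt_eq_mul_dt_schur_of_sq {n : ℕ}
    (hsq : ∀ B : Matrix (Fin n) (Fin n) HC, B.IsHermitian → dt B ^ 2 = (hatM B).det)
    {A : Matrix (Fin (n + 1)) (Fin (n + 1)) HC} (hA : A.IsHermitian) (h : A 0 0 ≠ 0) :
    dt A = (A 0 0).re * dt (schur (A 0 0).re⁻¹ A) := by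
  have := mul_eval_inv_of_natDegree_le_one (natDegree_schurPoly_le_one hsq hA)
    (diag_re_ne_zero hA h)
  simpa only [dt, eval_schurPoly] using this.symm

theorem dt_sq_eq_det_hatM {n : ℕ} {A : Matrix (Fin n) (Fin n) HC} (hA : A.IsHermitian) :
    dt A ^ 2 = (hatM A).det := by
  induction n with
  | zero => simp [dt]
  | succ n ih =>
    refine eq_of_isHermitian_of_eq_of_corner_ne_zero (f := fun B => dt B ^ 2)
      (continuous_dt.pow 2).continuousOn continuous_hatM.matrix_det.continuousOn
      (fun B hB h => ?_) hA
    rw [dt_eq_mul_dt_schur_of_sq (fun _ => ih) hB h, mul_pow, ih (isHermitian_schur hB _),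
      det_hatM_eq_sq_mul_det_schur (diag_re_ne_zero hB h) (diag_eq_coe_re hB 0)]

theorem dt_eq_mul_dt_schur {n : ℕ} {A : Matrix (Fin (n + 1)) (Fin (n + 1)) HC}
    (hA : A.IsHermitian) (h : A 0 0 ≠ 0) :
    dt A = (A 0 0).re * dt (schur (A 0 0).re⁻¹ A) :=
  dt_eq_mul_dt_schur_of_sq (fun _ => dt_sq_eq_det_hatM) hA h

/-! ### Existence and uniqueness -/

lemma cq_eq_coe (z : ℂ) : cq z = (z : HC) :=
  rfl

lemma qdia_eq_star (x : HC) : qdia x = star x := by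
  ext <;> simp [qdia]

lemma isHerm_iff_isHermitian {n : ℕ} {A : Matrix (Fin n) (Fin n) HC} :
    IsHerm A ↔ A.IsHermitian := by
  simp only [IsHerm, qdia_eq_star, Matrix.IsHermitian.ext_iff]

lemma of_inverse_corner_eq_schur {n : ℕ} {A : Matrix (Fin (n + 1)) (Fin (n + 1)) HC}
    (hA : A.IsHermitian) (h : A 0 0 ≠ 0) :
    (Matrix.of fun i j : Fin n =>
      A i.succ j.succ - Ring.inverse (A 0 0) * A i.succ 0 * A 0 j.succ) =
      schur (A 0 0).re⁻¹ A := by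
  have hinv : Ring.inverse (A 0 0) = ((A 0 0).re⁻¹ : ℂ) := by
    have hx := diag_re_ne_zero hA h
    have hmul : A 0 0 * ((A 0 0).re⁻¹ : ℂ) = 1 := by
      nth_rw 1 [diag_eq_coe_re hA 0]
      rw [← Quaternion.coe_mul, mul_inv_cancel₀ hx, Quaternion.coe_one]
    exact (Ring.inverse_unit ⟨A 0 0, _, hmul, Quaternion.coe_commutes _ _ |>.trans hmul⟩)
  ext1 i j
  simp only [hinv, schur, Matrix.of_apply, ← Quaternion.coe_mul_eq_smul, mul_assoc]

lemma isDtSeq_iff {D : ∀ n : ℕ, Matrix (Fin (n + 1)) (Fin (n + 1)) HC → HC} :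
    IsDtSeq D ↔
      (∀ n, ContinuousOn (D n) {A | A.IsHermitian}) ∧
      (∀ A : Matrix (Fin 1) (Fin 1) HC, A.IsHermitian → D 0 A = A 0 0) ∧
      ∀ (n : ℕ) (A : Matrix (Fin (n + 2)) (Fin (n + 2)) HC), A.IsHermitian → A 0 0 ≠ 0 →
        D (n + 1) A = A 0 0 * D n (schur (A 0 0).re⁻¹ A) := by
  simp only [IsDtSeq, isHerm_iff_isHermitian]
  refine and_congr_right' (and_congr_right' ?_)
  refine forall₄_congr fun n A hA h => ?_
  rw [of_inverse_corner_eq_schur hA h]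

theorem isDtSeq_dt : IsDtSeq fun _ A => cq (dt A) := by
  simp only [isDtSeq_iff, cq_eq_coe]
  refine ⟨fun n => (HC.continuous_coe.comp continuous_dt).continuousOn, ?_, ?_⟩
  · intro A hA
    rw [diag_eq_coe_re hA 0]
    simp [dt]
  · intro n A hA h
    rw [dt_eq_mul_dt_schur hA h, Quaternion.coe_mul, ← diag_eq_coe_re hA]

theorem IsDtSeq.unique {D D' : ∀ n : ℕ, Matrix (Fin (n + 1)) (Fin (n + 1)) HC → HC}
    (hD : IsDtSeq D) (hD' : IsDtSeq D') (n : ℕ) {A : Matrix (Fin (n + 1)) (Fin (n + 1)) HC}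
    (hA : A.IsHermitian) : D n A = D' n A := by
  obtain ⟨hcont, hone, hsucc⟩ := isDtSeq_iff.mp hD
  obtain ⟨hcont', hone', hsucc'⟩ := isDtSeq_iff.mp hD'
  induction n with
  | zero => rw [hone A hA, hone' A hA]
  | succ n ih =>
    refine eq_of_isHermitian_of_eq_of_corner_ne_zero (hcont _) (hcont' _) (fun B hB h => ?_) hA
    rw [hsucc n B hB h, hsucc' n B hB h, ih (isHermitian_schur hB _)]

/-- There exists a unique sequence of maps `(dt_n)_{n≥1}`,
`dt_n : H_n(ℍ_ℂ) → ℍ_ℂ`, which is continuous, satisfies `dt₁((x₁₁)) = x₁₁` and the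
inductive formula `dt_{n+1}(x) = x₁₁ · dt_n((x_{ij} − x₁₁⁻¹ x_{i1} x_{1j})_{2≤i,j≤n+1})`
whenever `x₁₁ ≠ 0`; moreover all its values lie in `ℂ ⊆ ℍ_ℂ`. -/
theorem statement0 :
    ∃ D : ∀ n : ℕ, Matrix (Fin (n + 1)) (Fin (n + 1)) HC → HC,
      IsDtSeq D ∧
      (∀ (n : ℕ) (A : Matrix (Fin (n + 1)) (Fin (n + 1)) HC), IsHerm A →
        ∃ z : ℂ, D n A = cq z) ∧
      (∀ D' : ∀ n : ℕ, Matrix (Fin (n + 1)) (Fin (n + 1)) HC → HC, IsDtSeq D' →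
        ∀ (n : ℕ) (A : Matrix (Fin (n + 1)) (Fin (n + 1)) HC), IsHerm A →
          D' n A = D n A) := by
  refine ⟨fun n A => cq (dt A), isDtSeq_dt, fun n A _ => ⟨dt A, rfl⟩, fun D' hD' n A hA => ?_⟩
  exact hD'.unique isDtSeq_dt n (isHerm_iff_isHermitian.mp hA)
end
end

section
/- Let h₁, h₂ ∈ ℍ be real quaternions of norm 1. Then the map T : 𝕆_ℝ → 𝕆_ℝ defined by T(x₁,x₂) = (x₁h₁, x₂h₂) is an asymmetric triple isomorphism of 𝕆_ℝ. If moreover h₁ = 1, then T is an automorphism of 𝕆_ℝ. -/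
/-!
Every term of `(x⬝y⋄)⬝z` has the form `± a b⋄ c`, where `a` and `b` are components with the same
index `i` and `c` has the index `j` of the component of the result. Replacing `a`, `b`, `c` by
`a hᵢ`, `b hᵢ`, `c hⱼ` turns it into `± a hᵢ hᵢ⋄ b⋄ c hⱼ = ± a b⋄ c hⱼ`.
Taking `y = 1` gives `x⬝z`, and taking `x = z = 1` gives `y⋄`, so an asymmetric triple isomorphism
fixing `1` is an automorphism.
-/

noncomputable section

/-- The real quaternions `ℍ`. -/
abbrev HR : Type := Quaternion ℝ

/-- Quaternion conjugation `x ↦ x⋄` on `ℍ`. -/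
def rqdia (x : HR) : HR := ⟨x.re, -x.imI, -x.imJ, -x.imK⟩

/-- The real octonions `𝕆_ℝ`, modelled as pairs of real quaternions. -/
abbrev OR : Type := HR × HR

/-- Cayley–Dickson multiplication on `𝕆_ℝ`. -/
def rmul (x y : OR) : OR :=
  (x.1 * y.1 - y.2 * rqdia x.2, rqdia x.1 * y.2 + y.1 * x.2)

/-- The octonion unit `1 = (1, 0)`. -/
def rone : OR := (1, 0)

/-- The linear involution `x ↦ x⋄` on `𝕆_ℝ`. -/
def rdia (x : OR) : OR := (rqdia x.1, -x.2)

/-- The squared Euclidean norm of `ℝ⁸`: `‖(x₁,x₂)‖² = ‖x₁‖² + ‖x₂‖²`. -/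
def rnormSq (x : OR) : ℝ := ‖x.1‖ ^ 2 + ‖x.2‖ ^ 2

/-- An asymmetric triple isomorphism of `𝕆_ℝ`: a real-linear bijection `T` with
`T((x⬝y⋄)⬝z) = (T(x)⬝T(y)⋄)⬝T(z)` for all `x, y, z`. -/
def IsATI (T : OR → OR) : Prop :=
  IsLinearMap ℝ T ∧ Function.Bijective T ∧
    ∀ x y z : OR, T (rmul (rmul x (rdia y)) z) = rmul (rmul (T x) (rdia (T y))) (T z)

/-- An automorphism of `𝕆_ℝ`: a real-linear bijection `T` with `T(1) = 1`,
`T(x⋄) = T(x)⋄` and `T(x⬝y) = T(x)⬝T(y)`. -/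
def IsAutOR (T : OR → OR) : Prop :=
  IsLinearMap ℝ T ∧ Function.Bijective T ∧ T rone = rone ∧
    (∀ x : OR, T (rdia x) = rdia (T x)) ∧
    ∀ x y : OR, T (rmul x y) = rmul (T x) (T y)

theorem rqdia_eq_star (x : HR) : rqdia x = star x := by
  ext <;> simp [rqdia]

theorem rmul_rone (x : OR) : rmul x rone = x := by
  simp [rmul, rone, rqdia_eq_star]

theorem rone_rmul (x : OR) : rmul rone x = x := by
  simp [rmul, rone, rqdia_eq_star]

theorem rdia_rone : rdia rone = rone := by
  simp [rdia, rone, rqdia_eq_star]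

theorem rmul_rmul_rdia (x y z : OR) :
    rmul (rmul x (rdia y)) z =
      (x.1 * star y.1 * z.1 + y.2 * star x.2 * z.1 + z.2 * star y.2 * x.1 - z.2 * star x.2 * y.1,
        y.1 * star x.1 * z.2 + x.2 * star y.2 * z.2 - z.1 * star x.1 * y.2
          + z.1 * star y.1 * x.2) := by
  simp only [rmul, rdia, rqdia_eq_star, star_sub, star_add, star_mul, star_neg, star_star]
  ext1 <;> noncomm_ring

theorem IsATI.isAutOR {T : OR → OR} (hT : IsATI T) (hone : T rone = rone) : IsAutOR T := by
  obtain ⟨hlin, hbij, htriple⟩ := hT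
  refine ⟨hlin, hbij, hone, fun x => ?_, fun x y => ?_⟩
  · simpa only [hone, rone_rmul, rmul_rone] using htriple rone x rone
  · simpa only [hone, rdia_rone, rmul_rone] using htriple x rone y

theorem mul_mul_star_mul_of_mem_unitary {M : Type*} [Monoid M] [StarMul M] {u : M}
    (hu : u ∈ unitary M) (a b : M) : a * u * star (b * u) = a * star b := by
  rw [star_mul, mul_assoc, ← mul_assoc u, Unitary.mul_star_self_of_mem hu, one_mul]

theorem mulRight_bijective_of_mem_unitary {M : Type*} [Monoid M] [StarMul M] {u : M}
    (hu : u ∈ unitary M) : Function.Bijective (· * u) :=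
  (Unitary.toUnits ⟨u, hu⟩).mulRight_bijective

theorem mem_unitary_quaternion_iff_norm_eq_one {q : Quaternion ℝ} :
    q ∈ unitary (Quaternion ℝ) ↔ ‖q‖ = 1 := by
  rw [Unitary.mem_iff, Quaternion.star_mul_self, Quaternion.self_mul_star, and_self,
    Quaternion.normSq_eq_norm_mul_self, ← Quaternion.coe_one, Quaternion.coe_inj, ← sq,
    pow_eq_one_iff_of_nonneg (norm_nonneg q) two_ne_zero]

theorem isATI_mulRight_prodMap {h₁ h₂ : HR} (hu₁ : h₁ ∈ unitary HR) (hu₂ : h₂ ∈ unitary HR) :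
    IsATI (fun x : OR => (x.1 * h₁, x.2 * h₂)) := by
  refine ⟨((LinearMap.mulRight ℝ h₁).prodMap (LinearMap.mulRight ℝ h₂)).isLinear,
    (mulRight_bijective_of_mem_unitary hu₁).prodMap (mulRight_bijective_of_mem_unitary hu₂),
    fun x y z => ?_⟩
  simp only [rmul_rmul_rdia, mul_mul_star_mul_of_mem_unitary hu₁,
    mul_mul_star_mul_of_mem_unitary hu₂, add_mul, sub_mul, ← mul_assoc]

/-- For norm-one real quaternions `h₁, h₂`, the map
`T(x₁,x₂) = (x₁h₁, x₂h₂)` is an asymmetric triple isomorphism of `𝕆_ℝ`;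
if moreover `h₁ = 1`, it is an automorphism of `𝕆_ℝ`. -/
theorem statement9 (h₁ h₂ : HR) (hn₁ : ‖h₁‖ = 1) (hn₂ : ‖h₂‖ = 1) :
    IsATI (fun x : OR => (x.1 * h₁, x.2 * h₂)) ∧
    (h₁ = 1 → IsAutOR (fun x : OR => (x.1 * h₁, x.2 * h₂))) := by
  have hT : IsATI (fun x : OR => (x.1 * h₁, x.2 * h₂)) :=
    isATI_mulRight_prodMap (mem_unitary_quaternion_iff_norm_eq_one.mpr hn₁)
      (mem_unitary_quaternion_iff_norm_eq_one.mpr hn₂)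
  exact ⟨hT, fun h => hT.isAutOR (by simp [rone, h])⟩
end
end
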